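/- Let G and H be groups and n ≥ 1. The external tensor product induces a bijection from the disjoint union, over all pairs (p, q) of positive integers with p * q = n, of the product (unitary-equivalence classes of irreducible p-dimensional unitary representations of G) × (unitary-equivalence classes of irreducible q-dimensional unitary representations of H), onto the set of unitary-equivalence classes of irreducible n-dimensional unitary representations of G × H; the map sends the class of (ρ, σ) to the class of ρ ⊠ σ (transported along Fin (p*q) ≃ Fin n). -/

import Mathlib

/-!
Everything is expressed through spaces of intertwiners. Kernels of intertwiners are invariant, so a
nonzero intertwiner `T` out of an irreducible representation is injective; as `Tᴴ * T` is moreover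
scalar by Schur's lemma, a nonzero intertwiner between irreducible representations is a multiple of
a unitary equivalence.

The space of `ρ ⊠ σ` is explored with the maps `· ⊗ w : ℂᵖ → ℂᵖ ⊗ ℂ^q` and
`v ⊗ · : ℂ^q → ℂᵖ ⊗ ℂ^q`, which intertwine the action of one factor when the other factor acts
trivially. Compressing an intertwiner `ρ ⊠ σ → ρ' ⊠ σ'` by such maps gives intertwiners `ρ → ρ'` and
`σ → σ'`. With `ρ' = ρ` and `σ' = σ` they are scalar, which makes `ρ ⊠ σ` irreducible; in general
some of them are nonzero, which makes `ρ` and `σ` unique.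

Conversely, let `τ` be an irreducible representation of `G × H`, let `ρ` be an irreducible
constituent of `τ|_G`, and fix a nonzero `v`. Evaluation at `v` embeds the multiplicity space
`Hom_G(ρ, τ)` into `ℂⁿ` as an `H`-invariant subspace, so that no inner product has to be built on
it. For an irreducible `σ` inside this subspace, the map `a ⊗ w ↦ D_w a`, where `D_w v = w`, is a
nonzero intertwiner `ρ ⊠ σ → τ`.
-/

open Matrix Kronecker

/-- A submodule `W` of `ℂⁿ` is invariant under the unitary representation `ρ`. -/
def RepInvariant {G : Type*} [Group G] {n : ℕ} (ρ : G →* Matrix.unitaryGroup (Fin n) ℂ)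
    (W : Submodule ℂ (Fin n → ℂ)) : Prop :=
  ∀ (g : G), ∀ v ∈ W, (ρ g).val.mulVec v ∈ W

/-- A unitary representation is irreducible if it is at least one-dimensional and the
only invariant submodules are `⊥` and `⊤`. -/
def RepIrreducible {G : Type*} [Group G] {n : ℕ}
    (ρ : G →* Matrix.unitaryGroup (Fin n) ℂ) : Prop :=
  1 ≤ n ∧ ∀ W : Submodule ℂ (Fin n → ℂ), RepInvariant ρ W → W = ⊥ ∨ W = ⊤

/-- Unitary equivalence of two `n`-dimensional unitary representations. -/
def UnitarilyEquivalent {G : Type*} [Group G] {n : ℕ}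
    (ρ ρ' : G →* Matrix.unitaryGroup (Fin n) ℂ) : Prop :=
  ∃ A : Matrix.unitaryGroup (Fin n) ℂ, ∀ g : G, ρ' g = A * ρ g * A⁻¹

lemma kronecker_conjTranspose {p q : ℕ} (A : Matrix (Fin p) (Fin p) ℂ)
    (B : Matrix (Fin q) (Fin q) ℂ) : (A ⊗ₖ B)ᴴ = Aᴴ ⊗ₖ Bᴴ := by
  ext ⟨i, j⟩ ⟨k, l⟩
  simp [Matrix.conjTranspose_apply, mul_comm]

/-- The Kronecker product of unitary matrices, reindexed to be of size `p * q`, is unitary. -/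
def kroneckerUnitary {p q : ℕ} (A : Matrix.unitaryGroup (Fin p) ℂ)
    (B : Matrix.unitaryGroup (Fin q) ℂ) : Matrix.unitaryGroup (Fin (p * q)) ℂ :=
  ⟨Matrix.reindex finProdFinEquiv finProdFinEquiv (A.val ⊗ₖ B.val), by
    constructor
    · show star (Matrix.reindex finProdFinEquiv finProdFinEquiv (A.val ⊗ₖ B.val)) *
        (Matrix.reindex finProdFinEquiv finProdFinEquiv (A.val ⊗ₖ B.val)) = 1
      have hs : star (Matrix.reindex finProdFinEquiv finProdFinEquiv (A.val ⊗ₖ B.val)) =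
          Matrix.reindex finProdFinEquiv finProdFinEquiv ((star A.val) ⊗ₖ (star B.val)) := by
        show (Matrix.reindex finProdFinEquiv finProdFinEquiv (A.val ⊗ₖ B.val))ᴴ = _
        rw [Matrix.reindex_apply, Matrix.reindex_apply, Matrix.conjTranspose_submatrix,
          Matrix.star_eq_conjTranspose, Matrix.star_eq_conjTranspose, ← kronecker_conjTranspose]
      rw [hs, Matrix.reindex_apply, Matrix.reindex_apply, Matrix.submatrix_mul_equiv,
        ← Matrix.mul_kronecker_mul]
      have h1 : star A.val * A.val = 1 := A.2.1
      have h2 : star B.val * B.val = 1 := B.2.1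
      rw [h1, h2, Matrix.one_kronecker_one, Matrix.submatrix_one_equiv]
    · show (Matrix.reindex finProdFinEquiv finProdFinEquiv (A.val ⊗ₖ B.val)) *
        star (Matrix.reindex finProdFinEquiv finProdFinEquiv (A.val ⊗ₖ B.val)) = 1
      have hs : star (Matrix.reindex finProdFinEquiv finProdFinEquiv (A.val ⊗ₖ B.val)) =
          Matrix.reindex finProdFinEquiv finProdFinEquiv ((star A.val) ⊗ₖ (star B.val)) := by
        show (Matrix.reindex finProdFinEquiv finProdFinEquiv (A.val ⊗ₖ B.val))ᴴ = _
        rw [Matrix.reindex_apply, Matrix.reindex_apply, Matrix.conjTranspose_submatrix,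
          Matrix.star_eq_conjTranspose, Matrix.star_eq_conjTranspose, ← kronecker_conjTranspose]
      rw [hs, Matrix.reindex_apply, Matrix.reindex_apply, Matrix.submatrix_mul_equiv,
        ← Matrix.mul_kronecker_mul]
      have h1 : A.val * star A.val = 1 := A.2.2
      have h2 : B.val * star B.val = 1 := B.2.2
      rw [h1, h2, Matrix.one_kronecker_one, Matrix.submatrix_one_equiv]⟩

/-- The external tensor product of unitary representations. -/
def extTensor {G H : Type*} [Group G] [Group H] {p q : ℕ}
    (ρ : G →* Matrix.unitaryGroup (Fin p) ℂ) (σ : H →* Matrix.unitaryGroup (Fin q) ℂ) :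
    (G × H) →* Matrix.unitaryGroup (Fin (p * q)) ℂ where
  toFun x := kroneckerUnitary (ρ x.1) (σ x.2)
  map_one' := by
    apply Subtype.ext
    show Matrix.reindex finProdFinEquiv finProdFinEquiv ((ρ 1).val ⊗ₖ (σ 1).val) = 1
    rw [map_one ρ, map_one σ]
    show Matrix.reindex finProdFinEquiv finProdFinEquiv
      ((1 : Matrix (Fin p) (Fin p) ℂ) ⊗ₖ (1 : Matrix (Fin q) (Fin q) ℂ)) = 1
    rw [Matrix.one_kronecker_one, Matrix.reindex_apply, Matrix.submatrix_one_equiv]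
  map_mul' x y := by
    apply Subtype.ext
    show Matrix.reindex finProdFinEquiv finProdFinEquiv ((ρ (x.1 * y.1)).val ⊗ₖ (σ (x.2 * y.2)).val)
      = Matrix.reindex finProdFinEquiv finProdFinEquiv ((ρ x.1).val ⊗ₖ (σ x.2).val) *
        Matrix.reindex finProdFinEquiv finProdFinEquiv ((ρ y.1).val ⊗ₖ (σ y.2).val)
    rw [map_mul ρ, map_mul σ]
    rw [Matrix.reindex_apply, Matrix.reindex_apply, Matrix.reindex_apply,
      Matrix.submatrix_mul_equiv, ← Matrix.mul_kronecker_mul]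
    rfl

/-- Transport of a unitary representation along an equality of dimensions. -/
def transportRep {G : Type*} [Group G] {m n : ℕ} (h : m = n)
    (ρ : G →* Matrix.unitaryGroup (Fin m) ℂ) : G →* Matrix.unitaryGroup (Fin n) ℂ :=
  h ▸ ρ

/-- The type of irreducible `n`-dimensional unitary representations of `G`. -/
def IrrRep (G : Type*) [Group G] (n : ℕ) : Type _ :=
  {ρ : G →* Matrix.unitaryGroup (Fin n) ℂ // RepIrreducible ρ}

/-- Unitary-equivalence classes of `n`-dimensional unitary representations of `G`. -/
def RepClass (G : Type*) [Group G] (n : ℕ) : Type _ :=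
  Quot (fun ρ σ : G →* Matrix.unitaryGroup (Fin n) ℂ => UnitarilyEquivalent ρ σ)

/-- Unitary-equivalence classes of irreducible `n`-dimensional unitary representations. -/
def IrrClass (G : Type*) [Group G] (n : ℕ) : Type _ :=
  Quot (fun ρ σ : IrrRep G n => UnitarilyEquivalent ρ.1 σ.1)

/-! ### Matrices with orthonormal columns -/

section OrthonormalColumns

open scoped ComplexOrder

variable {m n 𝕜 : Type*} [Fintype m] [RCLike 𝕜]

lemma exists_conjTranspose_mul_self_eq_one_range_eq (W : Submodule 𝕜 (m → 𝕜)) :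
    ∃ (p : ℕ) (T : Matrix m (Fin p) 𝕜), Tᴴ * T = 1 ∧ T.mulVecLin.range = W := by
  let e := (WithLp.linearEquiv 2 𝕜 (m → 𝕜)).symm
  let b := stdOrthonormalBasis 𝕜 (W.map e.toLinearMap)
  let v k : EuclideanSpace 𝕜 m := b k
  have hv : Orthonormal 𝕜 v := b.orthonormal.comp_linearIsometry (Submodule.subtypeₗᵢ _)
  have hspan : Submodule.span 𝕜 (Set.range v) = W.map e.toLinearMap := by
    have h := congrArg (Submodule.map (W.map e.toLinearMap).subtype) b.toBasis.span_eq
    rwa [Submodule.map_span, Submodule.map_top, Submodule.range_subtype, ← Set.range_comp,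
      b.coe_toBasis] at h
  refine ⟨_, Matrix.of fun i k => v k i, ?_, ?_⟩
  · exact (Matrix.gram_eq_conjTranspose_mul (EuclideanSpace.basisFun m 𝕜) v).symm.trans
      (Matrix.gram_eq_one_iff_orthonormal.2 hv)
  · have hcol : (Matrix.of fun i k => v k i).col = e.symm ∘ v := rfl
    rw [Matrix.range_mulVecLin, hcol, Set.range_comp, ← LinearEquiv.coe_coe,
      ← Submodule.map_span, hspan, ← Submodule.map_comp]
    simp

lemma exists_smul_conjTranspose_mul_self_eq_one [Finite n] [DecidableEq n] {T : Matrix m n 𝕜}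
    {c : 𝕜} (hT : Tᴴ * T = c • 1) (hT0 : T ≠ 0) : ∃ s : 𝕜, (s • T)ᴴ * (s • T) = 1 := by
  have hc0 : c ≠ 0 := by
    rintro rfl
    exact hT0 (Matrix.conjTranspose_mul_self_eq_zero.1 (by rw [hT, zero_smul]))
  obtain ⟨j⟩ : Nonempty n := by
    by_contra h
    have := not_nonempty_iff.1 h
    exact hT0 (Subsingleton.elim _ _)
  have hc : 0 ≤ c := by
    simpa [hT] using (Matrix.posSemidef_conjTranspose_mul_self T).diag_nonneg (i := j)
  obtain ⟨r, hr, rfl⟩ := RCLike.nonneg_iff_exists_ofReal.1 hc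
  refine ⟨((√r)⁻¹ : ℝ), ?_⟩
  have hr0 : r ≠ 0 := RCLike.ofReal_ne_zero.1 hc0
  have hs : (√r)⁻¹ * ((√r)⁻¹ * r) = 1 := by
    rw [← mul_assoc, ← mul_inv, Real.mul_self_sqrt hr, inv_mul_cancel₀ hr0]
  rw [Matrix.conjTranspose_smul, Matrix.smul_mul, Matrix.mul_smul, hT, RCLike.star_def,
    RCLike.conj_ofReal, smul_smul, smul_smul, ← RCLike.ofReal_mul,
    ← RCLike.ofReal_mul, mul_assoc, hs, RCLike.ofReal_one, one_smul]

end OrthonormalColumns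

/-! ### Unitary equivalence and transport -/

section Equivalence

variable {G H : Type*} [Group G] [Group H]

lemma unitarilyEquivalent_equivalence (n : ℕ) :
    Equivalence (UnitarilyEquivalent (G := G) (n := n)) where
  refl ρ := ⟨1, fun g => by simp⟩
  symm := by
    rintro ρ σ ⟨A, hA⟩
    exact ⟨A⁻¹, fun g => by rw [hA]; group⟩
  trans := by
    rintro ρ σ τ ⟨A, hA⟩ ⟨B, hB⟩
    exact ⟨B * A, fun g => by rw [hB, hA]; group⟩

protected lemma UnitarilyEquivalent.transportRep {m n : ℕ}
    {ρ ρ' : G →* Matrix.unitaryGroup (Fin m) ℂ} (h : m = n) (hρ : UnitarilyEquivalent ρ ρ') :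
    UnitarilyEquivalent (transportRep h ρ) (transportRep h ρ') := by
  subst h; exact hρ

protected lemma RepIrreducible.transportRep {m n : ℕ} {ρ : G →* Matrix.unitaryGroup (Fin m) ℂ}
    (h : m = n) (hρ : RepIrreducible ρ) : RepIrreducible (transportRep h ρ) := by
  subst h; exact hρ

protected lemma UnitarilyEquivalent.extTensor {p q : ℕ} {ρ ρ' : G →* Matrix.unitaryGroup (Fin p) ℂ}
    {σ σ' : H →* Matrix.unitaryGroup (Fin q) ℂ} (hρ : UnitarilyEquivalent ρ ρ')
    (hσ : UnitarilyEquivalent σ σ') :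
    UnitarilyEquivalent (extTensor ρ σ) (extTensor ρ' σ') := by
  obtain ⟨A, hA⟩ := hρ
  obtain ⟨B, hB⟩ := hσ
  -- the external tensor product of the identities is the Kronecker product as a homomorphism
  let κ := extTensor (MonoidHom.id (Matrix.unitaryGroup (Fin p) ℂ))
    (MonoidHom.id (Matrix.unitaryGroup (Fin q) ℂ))
  refine ⟨κ (A, B), fun x => ?_⟩
  calc κ (ρ' x.1, σ' x.2) = κ ((A, B) * (ρ x.1, σ x.2) * (A, B)⁻¹) := by rw [hA, hB]; rfl
    _ = κ (A, B) * κ (ρ x.1, σ x.2) * (κ (A, B))⁻¹ := by rw [map_mul, map_mul, map_inv]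

end Equivalence

/-! ### Intertwiners -/

section Intertwiners

variable {G : Type*} [Group G] {l m n : ℕ} {ρ : G →* Matrix.unitaryGroup (Fin m) ℂ}
  {π : G →* Matrix.unitaryGroup (Fin n) ℂ} {τ : G →* Matrix.unitaryGroup (Fin l) ℂ}

/-- The space `Hom_G(ρ, π)` of intertwiners from `ρ` to `π`, as a space of matrices. -/
def intertwiners (ρ : G →* Matrix.unitaryGroup (Fin m) ℂ)
    (π : G →* Matrix.unitaryGroup (Fin n) ℂ) : Submodule ℂ (Matrix (Fin n) (Fin m) ℂ) where
  carrier := {T | ∀ g, T * (ρ g).val = (π g).val * T}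
  zero_mem' g := by simp
  add_mem' hS hT g := by rw [Matrix.add_mul, Matrix.mul_add, hS, hT]
  smul_mem' c T hT g := by rw [Matrix.smul_mul, Matrix.mul_smul, hT]

lemma one_mem_intertwiners : (1 : Matrix (Fin m) (Fin m) ℂ) ∈ intertwiners ρ ρ := fun g => by
  rw [Matrix.one_mul, Matrix.mul_one]

lemma mul_mem_intertwiners {S : Matrix (Fin l) (Fin n) ℂ} {T : Matrix (Fin n) (Fin m) ℂ}
    (hS : S ∈ intertwiners π τ) (hT : T ∈ intertwiners ρ π) : S * T ∈ intertwiners ρ τ :=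
  fun g => by rw [Matrix.mul_assoc, hT, ← Matrix.mul_assoc, hS, Matrix.mul_assoc]

lemma conjTranspose_mem_intertwiners {T : Matrix (Fin n) (Fin m) ℂ} (hT : T ∈ intertwiners ρ π) :
    Tᴴ ∈ intertwiners π ρ := fun g => by
  have h := congrArg Matrix.conjTranspose (hT g⁻¹)
  rw [Matrix.conjTranspose_mul, Matrix.conjTranspose_mul, map_inv, map_inv] at h
  simpa [← Matrix.star_eq_conjTranspose] using h.symm

lemma repInvariant_ker_of_mem_intertwiners {T : Matrix (Fin n) (Fin m) ℂ}
    (hT : T ∈ intertwiners ρ π) : RepInvariant ρ T.mulVecLin.ker := fun g v hv => by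
  rw [LinearMap.mem_ker, Matrix.mulVecLin_apply] at hv ⊢
  rw [Matrix.mulVec_mulVec, hT, ← Matrix.mulVec_mulVec, hv, Matrix.mulVec_zero]

lemma RepInvariant.map_mulVecLin {W : Submodule ℂ (Fin m → ℂ)} (hW : RepInvariant ρ W)
    {T : Matrix (Fin n) (Fin m) ℂ} (hT : T ∈ intertwiners ρ π) :
    RepInvariant π (W.map T.mulVecLin) := by
  rintro g _ ⟨v, hv, rfl⟩
  refine ⟨_, hW g v hv, ?_⟩
  rw [Matrix.mulVecLin_apply, Matrix.mulVecLin_apply, Matrix.mulVec_mulVec, hT,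
    Matrix.mulVec_mulVec]

lemma UnitarilyEquivalent.exists_mem_intertwiners_ne_zero {h : m = l} {h' : n = l}
    (hm : 1 ≤ m) (he : UnitarilyEquivalent (transportRep h ρ) (transportRep h' π)) :
    ∃ T ∈ intertwiners ρ π, T ≠ 0 := by
  subst h h'
  obtain ⟨A, hA⟩ := he
  have : NeZero n := ⟨Nat.one_le_iff_ne_zero.1 hm⟩
  refine ⟨A.val, fun g => ?_, (Unitary.toUnits A).ne_zero⟩
  exact congrArg Subtype.val (eq_mul_inv_iff_mul_eq.1 (hA g)).symm

end Intertwiners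

/-! ### Schur's lemma -/

section Schur

variable {G : Type*} [Group G] {m n : ℕ} {ρ : G →* Matrix.unitaryGroup (Fin m) ℂ}
  {π : G →* Matrix.unitaryGroup (Fin n) ℂ}

namespace RepIrreducible

lemma neZero (hρ : RepIrreducible ρ) : NeZero m :=
  ⟨Nat.one_le_iff_ne_zero.1 hρ.1⟩

lemma eq_zero_of_mulVec_eq_zero (hρ : RepIrreducible ρ) {T : Matrix (Fin n) (Fin m) ℂ}
    (hT : T ∈ intertwiners ρ π) {v : Fin m → ℂ} (hv : v ≠ 0) (hTv : T *ᵥ v = 0) : T = 0 := by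
  have hker : T.mulVecLin.ker ≠ ⊥ := (Submodule.ne_bot_iff _).2 ⟨v, hTv, hv⟩
  have htop := (hρ.2 _ (repInvariant_ker_of_mem_intertwiners hT)).resolve_left hker
  exact Matrix.ext_iff_mulVec.2 fun w => by
    rw [Matrix.zero_mulVec]
    exact LinearMap.congr_fun (LinearMap.ker_eq_top.1 htop) w

lemma mulVec_injective (hρ : RepIrreducible ρ) {T : Matrix (Fin n) (Fin m) ℂ}
    (hT : T ∈ intertwiners ρ π) (hT0 : T ≠ 0) : Function.Injective T.mulVecLin :=
  (injective_iff_map_eq_zero _).2 fun _ hTv =>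
    by_contra fun hv => hT0 (hρ.eq_zero_of_mulVec_eq_zero hT hv hTv)

lemma dim_le (hρ : RepIrreducible ρ) {T : Matrix (Fin n) (Fin m) ℂ}
    (hT : T ∈ intertwiners ρ π) (hT0 : T ≠ 0) : m ≤ n := by
  simpa using LinearMap.finrank_le_finrank_of_injective (hρ.mulVec_injective hT hT0)

lemma exists_eq_smul_one (hρ : RepIrreducible ρ) {S : Matrix (Fin m) (Fin m) ℂ}
    (hS : S ∈ intertwiners ρ ρ) : ∃ c : ℂ, S = c • 1 := by
  have := hρ.neZero
  obtain ⟨c, hc⟩ := Module.End.exists_eigenvalue S.mulVecLin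
  obtain ⟨v, hv⟩ := hc.exists_hasEigenvector
  refine ⟨c, sub_eq_zero.1 <| hρ.eq_zero_of_mulVec_eq_zero
    (sub_mem hS (Submodule.smul_mem _ c one_mem_intertwiners)) hv.2 ?_⟩
  rw [Matrix.sub_mulVec, Matrix.smul_mulVec, Matrix.one_mulVec, sub_eq_zero]
  exact hv.apply_eq_smul

theorem unitarilyEquivalent_of_mem_intertwiners (hρ : RepIrreducible ρ) (hπ : RepIrreducible π)
    {T : Matrix (Fin n) (Fin m) ℂ} (hT : T ∈ intertwiners ρ π) (hT0 : T ≠ 0) :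
    ∃ h : m = n, UnitarilyEquivalent (transportRep h ρ) π := by
  have hT' := conjTranspose_mem_intertwiners hT
  obtain rfl : m = n := (hρ.dim_le hT hT0).antisymm
    (hπ.dim_le hT' (Matrix.conjTranspose_eq_zero.not.2 hT0))
  obtain ⟨c, hc⟩ := hρ.exists_eq_smul_one (mul_mem_intertwiners hT' hT)
  obtain ⟨s, hs⟩ := exists_smul_conjTranspose_mul_self_eq_one hc hT0
  refine ⟨rfl, ⟨s • T, Matrix.mem_unitaryGroup_iff'.2 hs⟩, fun g => ?_⟩
  exact eq_mul_inv_of_mul_eq (Subtype.ext (Submodule.smul_mem _ s hT g).symm)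

end RepIrreducible

end Schur

/-! ### Subrepresentations -/

section Subrepresentations

variable {G : Type*} [Group G] {n : ℕ} {π : G →* Matrix.unitaryGroup (Fin n) ℂ}

lemma RepInvariant.exists_isometric_intertwiner {W : Submodule ℂ (Fin n → ℂ)}
    (hW : RepInvariant π W) :
    ∃ (p : ℕ) (ρ : G →* Matrix.unitaryGroup (Fin p) ℂ), ∃ T ∈ intertwiners ρ π,
      Tᴴ * T = 1 ∧ T.mulVecLin.range = W := by
  obtain ⟨p, T, hT, rfl⟩ := exists_conjTranspose_mul_self_eq_one_range_eq W
  have hint (g : G) : T * (Tᴴ * (π g).val * T) = (π g).val * T :=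
    Matrix.ext_iff_mulVec.2 fun v => by
      obtain ⟨u, hu⟩ := hW g (T *ᵥ v) ⟨v, rfl⟩
      rw [Matrix.mulVecLin_apply] at hu
      rw [← Matrix.mulVec_mulVec, ← Matrix.mulVec_mulVec, ← Matrix.mulVec_mulVec,
        ← Matrix.mulVec_mulVec, ← hu, Matrix.mulVec_mulVec u, hT, Matrix.one_mulVec]
  have hunitary (g : G) : (Tᴴ * (π g).val * T)ᴴ * (Tᴴ * (π g).val * T) = 1 := by
    have hg : (π g).valᴴ * (π g).val = 1 := (π g).2.1
    calc (Tᴴ * (π g).val * T)ᴴ * (Tᴴ * (π g).val * T)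
        = Tᴴ * (π g).valᴴ * (T * (Tᴴ * (π g).val * T)) := by
          simp only [Matrix.conjTranspose_mul, Matrix.conjTranspose_conjTranspose,
            Matrix.mul_assoc]
      _ = Tᴴ * (π g).valᴴ * ((π g).val * T) := by rw [hint]
      _ = Tᴴ * ((π g).valᴴ * (π g).val) * T := by simp only [Matrix.mul_assoc]
      _ = 1 := by rw [hg, Matrix.mul_one, hT]
  let ρ : G →* Matrix.unitaryGroup (Fin p) ℂ :=
    { toFun g := ⟨Tᴴ * (π g).val * T, Matrix.mem_unitaryGroup_iff'.2 (hunitary g)⟩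
      map_one' := Subtype.ext (by simp [hT])
      map_mul' g h := Subtype.ext <| by
        simp only [map_mul, Matrix.UnitaryGroup.mul_val]
        rw [Matrix.mul_assoc (Tᴴ * _), hint]
        simp only [Matrix.mul_assoc] }
  exact ⟨p, ρ, T, hint, hT, rfl⟩

/-- The subrepresentation is carried by a minimal nonzero invariant subspace of `W`. -/
lemma RepInvariant.exists_irreducible_intertwiner {W : Submodule ℂ (Fin n → ℂ)}
    (hW : RepInvariant π W) (hW0 : W ≠ ⊥) :
    ∃ (p : ℕ) (ρ : G →* Matrix.unitaryGroup (Fin p) ℂ), ∃ T ∈ intertwiners ρ π,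
      RepIrreducible ρ ∧ T ≠ 0 ∧ T.mulVecLin.range ≤ W := by
  obtain ⟨V, hVW, ⟨hV, hV0⟩, hmin⟩ :=
    exists_minimal_le_of_wellFoundedLT (fun V => RepInvariant π V ∧ V ≠ ⊥) W ⟨hW, hW0⟩
  obtain ⟨p, ρ, T, hT, hTT, rfl⟩ := hV.exists_isometric_intertwiner
  have hT0 : T ≠ 0 := by
    rintro rfl
    simp at hV0
  have hinj : Function.Injective T.mulVecLin := fun v w hvw => by
    simpa [Matrix.mulVec_mulVec, hTT] using congrArg (Tᴴ *ᵥ ·) hvw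
  have hmap := Submodule.map_injective_of_injective hinj
  refine ⟨p, ρ, T, hT, ⟨?_, fun K hK => or_iff_not_imp_left.2 fun hK0 => hmap ?_⟩, hT0, hVW⟩
  · refine Nat.one_le_iff_ne_zero.2 ?_
    rintro rfl
    exact hT0 (Subsingleton.elim _ _)
  · have hKmap : K.map T.mulVecLin ≠ ⊥ := fun h => hK0 (hmap (h.trans (Submodule.map_bot _).symm))
    rw [Submodule.map_top]
    exact LinearMap.map_le_range.antisymm
      (hmin ⟨hK.map_mulVecLin hT, hKmap⟩ LinearMap.map_le_range)

lemma repIrreducible_of_intertwiners_scalar (hn : 1 ≤ n)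
    (h : ∀ S ∈ intertwiners π π, ∃ c : ℂ, S = c • 1) : RepIrreducible π := by
  refine ⟨hn, fun W hW => ?_⟩
  obtain ⟨p, ρ, T, hT, hTT, rfl⟩ := hW.exists_isometric_intertwiner
  obtain ⟨c, hc⟩ := h _ (mul_mem_intertwiners hT (conjTranspose_mem_intertwiners hT))
  -- the projection `T * Tᴴ` onto the subspace is scalar, so it is `0` or `1`
  have hcT : (c - 1) • T = 0 := by
    have := congrArg (· * T) hc
    rw [Matrix.mul_assoc, hTT, Matrix.mul_one, Matrix.smul_mul, Matrix.one_mul] at this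
    rw [sub_smul, one_smul, ← this, sub_self]
  rcases smul_eq_zero.1 hcT with hc1 | rfl
  · right
    rw [sub_eq_zero.1 hc1, one_smul] at hc
    refine LinearMap.range_eq_top.2 fun v => ⟨Tᴴ *ᵥ v, ?_⟩
    rw [Matrix.mulVecLin_apply, Matrix.mulVec_mulVec, hc, Matrix.one_mulVec]
  · left
    simp

end Subrepresentations

/-! ### Tensoring with a vector -/

section TensorVector

variable {R n : Type*} [CommSemiring R] {p q p' q' : ℕ}

/-- The matrix of `v ↦ v ⊗ w`, in the coordinates `finProdFinEquiv` of the tensor product. -/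
def tmulRight (p : ℕ) (w : Fin q → R) : Matrix (Fin (p * q)) (Fin p) R :=
  Matrix.of fun x i =>
    (1 : Matrix (Fin p) (Fin p) R) (finProdFinEquiv.symm x).1 i * w (finProdFinEquiv.symm x).2

/-- The matrix of `w ↦ v ⊗ w`, in the coordinates `finProdFinEquiv` of the tensor product. -/
def tmulLeft (q : ℕ) (v : Fin p → R) : Matrix (Fin (p * q)) (Fin q) R :=
  Matrix.of fun x j =>
    v (finProdFinEquiv.symm x).1 * (1 : Matrix (Fin q) (Fin q) R) (finProdFinEquiv.symm x).2 j

lemma tmulRight_mulVec (v : Fin p → R) (w : Fin q → R) :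
    tmulRight p w *ᵥ v = tmulLeft q v *ᵥ w := by
  ext x
  simp [tmulRight, tmulLeft, Matrix.mulVec, dotProduct, Matrix.one_apply, mul_comm]

lemma reindex_kronecker_mul_tmulRight (A : Matrix (Fin p) (Fin p) R) (B : Matrix (Fin q) (Fin q) R)
    (w : Fin q → R) :
    Matrix.reindex finProdFinEquiv finProdFinEquiv (A ⊗ₖ B) * tmulRight p w =
      tmulRight p (B *ᵥ w) * A := by
  ext x i
  simp [tmulRight, Matrix.mul_apply, ← finProdFinEquiv.sum_comp, Fintype.sum_prod_type,
    Matrix.one_apply, Matrix.mulVec, dotProduct, Finset.mul_sum, mul_comm, mul_left_comm,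
    -finProdFinEquiv_symm_apply]

lemma reindex_kronecker_mul_tmulLeft (A : Matrix (Fin p) (Fin p) R) (B : Matrix (Fin q) (Fin q) R)
    (v : Fin p → R) :
    Matrix.reindex finProdFinEquiv finProdFinEquiv (A ⊗ₖ B) * tmulLeft q v =
      tmulLeft q (A *ᵥ v) * B := by
  ext x j
  simp [tmulLeft, Matrix.mul_apply, ← finProdFinEquiv.sum_comp, Fintype.sum_prod_type,
    Matrix.one_apply, Matrix.mulVec, dotProduct, Finset.mul_sum, mul_comm, mul_left_comm,
    -finProdFinEquiv_symm_apply]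

lemma mul_tmulRight_single (T : Matrix n (Fin (p * q)) R) (j : Fin q) :
    T * tmulRight p (Pi.single j (1 : R)) = T.submatrix id fun i => finProdFinEquiv (i, j) := by
  ext k i
  simp [tmulRight, Matrix.mul_apply, ← finProdFinEquiv.sum_comp, Fintype.sum_prod_type,
    Matrix.one_apply, Pi.single_apply, -finProdFinEquiv_symm_apply]

lemma mul_tmulLeft_single (T : Matrix n (Fin (p * q)) R) (i : Fin p) :
    T * tmulLeft q (Pi.single i (1 : R)) = T.submatrix id fun j => finProdFinEquiv (i, j) := by
  ext k j
  simp [tmulLeft, Matrix.mul_apply, ← finProdFinEquiv.sum_comp, Fintype.sum_prod_type,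
    Matrix.one_apply, Pi.single_apply, -finProdFinEquiv_symm_apply]

lemma ext_mul_tmulRight_single {S T : Matrix n (Fin (p * q)) R}
    (h : ∀ j : Fin q,
      S * tmulRight p (Pi.single j (1 : R)) = T * tmulRight p (Pi.single j (1 : R))) : S = T := by
  ext k x
  obtain ⟨⟨i, j⟩, rfl⟩ := finProdFinEquiv.surjective x
  simpa [mul_tmulRight_single] using congrFun₂ (h j) k i

variable [StarRing R]

lemma conjTranspose_tmulRight_mul_tmulRight_apply (T : Matrix (Fin (p' * q')) (Fin (p * q)) R)
    (j' : Fin q') (j : Fin q) (i' : Fin p') (i : Fin p) :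
    ((tmulRight p' (Pi.single j' (1 : R)))ᴴ * (T * tmulRight p (Pi.single j (1 : R)))) i' i =
      T (finProdFinEquiv (i', j')) (finProdFinEquiv (i, j)) := by
  rw [← Matrix.conjTranspose_conjTranspose (T * _), ← Matrix.conjTranspose_mul,
    mul_tmulRight_single, mul_tmulRight_single]
  simp

lemma conjTranspose_tmulLeft_mul_tmulLeft_apply (T : Matrix (Fin (p' * q')) (Fin (p * q)) R)
    (i' : Fin p') (i : Fin p) (j' : Fin q') (j : Fin q) :
    ((tmulLeft q' (Pi.single i' (1 : R)))ᴴ * (T * tmulLeft q (Pi.single i (1 : R)))) j' j =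
      T (finProdFinEquiv (i', j')) (finProdFinEquiv (i, j)) := by
  rw [← Matrix.conjTranspose_conjTranspose (T * _), ← Matrix.conjTranspose_mul,
    mul_tmulLeft_single, mul_tmulLeft_single]
  simp

end TensorVector

/-! ### Intertwiners and external tensor products -/

section ExternalTensor

variable {G H : Type*} [Group G] [Group H] {p q p' q' n m : ℕ}
  {ρ : G →* Matrix.unitaryGroup (Fin p) ℂ} {σ : H →* Matrix.unitaryGroup (Fin q) ℂ}
  {ρ' : G →* Matrix.unitaryGroup (Fin p') ℂ} {σ' : H →* Matrix.unitaryGroup (Fin q') ℂ}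
  {τ : G × H →* Matrix.unitaryGroup (Fin n) ℂ} {τ' : G × H →* Matrix.unitaryGroup (Fin m) ℂ}

lemma intertwiners_le_comp {K : Type*} [Group K] (f : K →* G × H) :
    intertwiners τ τ' ≤ intertwiners (τ.comp f) (τ'.comp f) := fun _ hT k => hT (f k)

lemma mem_intertwiners_prod {T : Matrix (Fin m) (Fin n) ℂ}
    (hG : T ∈ intertwiners (τ.comp (.inl G H)) (τ'.comp (.inl G H)))
    (hH : T ∈ intertwiners (τ.comp (.inr G H)) (τ'.comp (.inr G H))) : T ∈ intertwiners τ τ' := by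
  rintro ⟨g, k⟩
  have hgk : ((g, k) : G × H) = (g, 1) * (1, k) := by simp
  have hg : T * (τ (g, 1)).val = (τ' (g, 1)).val * T := hG g
  have hk : T * (τ (1, k)).val = (τ' (1, k)).val * T := hH k
  rw [hgk, map_mul, map_mul, Matrix.UnitaryGroup.mul_val, Matrix.UnitaryGroup.mul_val,
    ← Matrix.mul_assoc, hg, Matrix.mul_assoc, hk, Matrix.mul_assoc]

lemma apply_inr_mem_intertwiners (k : H) :
    (τ (1, k)).val ∈ intertwiners (τ.comp (.inl G H)) (τ.comp (.inl G H)) := fun g => by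
  have h : τ (1, k) * τ (g, 1) = τ (g, 1) * τ (1, k) := by simp [← map_mul]
  exact congrArg Subtype.val h

lemma tmulRight_mem_intertwiners (w : Fin q → ℂ) :
    tmulRight p w ∈ intertwiners ρ ((extTensor ρ σ).comp (.inl G H)) := fun g => by
  have h := reindex_kronecker_mul_tmulRight (ρ g).val (σ 1).val w
  rw [map_one, Matrix.UnitaryGroup.one_val, Matrix.one_mulVec] at h
  rw [← h, ← Matrix.UnitaryGroup.one_val, ← map_one σ]
  rfl

lemma tmulLeft_mem_intertwiners (v : Fin p → ℂ) :
    tmulLeft q v ∈ intertwiners σ ((extTensor ρ σ).comp (.inr G H)) := fun k => by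
  have h := reindex_kronecker_mul_tmulLeft (ρ 1).val (σ k).val v
  rw [map_one, Matrix.UnitaryGroup.one_val, Matrix.one_mulVec] at h
  rw [← h, ← Matrix.UnitaryGroup.one_val, ← map_one ρ]
  rfl

lemma compress_tmulRight_mem_intertwiners {T : Matrix (Fin (p' * q')) (Fin (p * q)) ℂ}
    (hT : T ∈ intertwiners (extTensor ρ σ) (extTensor ρ' σ')) (w' : Fin q' → ℂ) (w : Fin q → ℂ) :
    (tmulRight p' w')ᴴ * (T * tmulRight p w) ∈ intertwiners ρ ρ' :=
  mul_mem_intertwiners (conjTranspose_mem_intertwiners (tmulRight_mem_intertwiners w'))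
    (mul_mem_intertwiners (intertwiners_le_comp _ hT) (tmulRight_mem_intertwiners w))

lemma compress_tmulLeft_mem_intertwiners {T : Matrix (Fin (p' * q')) (Fin (p * q)) ℂ}
    (hT : T ∈ intertwiners (extTensor ρ σ) (extTensor ρ' σ')) (v' : Fin p' → ℂ) (v : Fin p → ℂ) :
    (tmulLeft q' v')ᴴ * (T * tmulLeft q v) ∈ intertwiners σ σ' :=
  mul_mem_intertwiners (conjTranspose_mem_intertwiners (tmulLeft_mem_intertwiners v'))
    (mul_mem_intertwiners (intertwiners_le_comp _ hT) (tmulLeft_mem_intertwiners v))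

protected theorem RepIrreducible.extTensor (hρ : RepIrreducible ρ) (hσ : RepIrreducible σ) :
    RepIrreducible (extTensor ρ σ) := by
  have := hρ.neZero
  refine repIrreducible_of_intertwiners_scalar (Nat.mul_pos hρ.1 hσ.1) fun S hS => ?_
  choose c hc using fun j' j => hρ.exists_eq_smul_one
    (compress_tmulRight_mem_intertwiners hS (Pi.single j' 1) (Pi.single j 1))
  obtain ⟨d, hd⟩ := hσ.exists_eq_smul_one
    (compress_tmulLeft_mem_intertwiners hS (Pi.single 0 1) (Pi.single 0 1))
  have hSc i' j' i j : S (finProdFinEquiv (i', j')) (finProdFinEquiv (i, j)) =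
      c j' j * (1 : Matrix (Fin p) (Fin p) ℂ) i' i := by
    rw [← conjTranspose_tmulRight_mul_tmulRight_apply S, hc, Matrix.smul_apply, smul_eq_mul]
  have hcd j' j : c j' j = d * (1 : Matrix (Fin q) (Fin q) ℂ) j' j := by
    rw [← smul_eq_mul, ← Matrix.smul_apply, ← hd, conjTranspose_tmulLeft_mul_tmulLeft_apply, hSc,
      Matrix.one_apply_eq, mul_one]
  refine ⟨d, Matrix.ext fun x y => ?_⟩
  obtain ⟨⟨i', j'⟩, rfl⟩ := finProdFinEquiv.surjective x
  obtain ⟨⟨i, j⟩, rfl⟩ := finProdFinEquiv.surjective y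
  rw [hSc, hcd]
  simp [Matrix.one_apply, ite_and]

theorem unitarilyEquivalent_factors_of_extTensor (hρ : RepIrreducible ρ) (hσ : RepIrreducible σ)
    (hρ' : RepIrreducible ρ') (hσ' : RepIrreducible σ') {h : p * q = n} {h' : p' * q' = n}
    (he : UnitarilyEquivalent (transportRep h (extTensor ρ σ))
      (transportRep h' (extTensor ρ' σ'))) :
    (∃ e : p = p', UnitarilyEquivalent (transportRep e ρ) ρ') ∧
      ∃ e : q = q', UnitarilyEquivalent (transportRep e σ) σ' := by
  obtain ⟨T, hT, hT0⟩ := he.exists_mem_intertwiners_ne_zero (hρ.extTensor hσ).1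
  obtain ⟨x, y, hxy⟩ : ∃ x y, T x y ≠ 0 := by
    by_contra! h0
    exact hT0 (Matrix.ext h0)
  obtain ⟨⟨i', j'⟩, rfl⟩ := finProdFinEquiv.surjective x
  obtain ⟨⟨i, j⟩, rfl⟩ := finProdFinEquiv.surjective y
  refine ⟨hρ.unitarilyEquivalent_of_mem_intertwiners hρ'
      (compress_tmulRight_mem_intertwiners hT (Pi.single j' 1) (Pi.single j 1)) fun h0 => hxy ?_,
    hσ.unitarilyEquivalent_of_mem_intertwiners hσ'
      (compress_tmulLeft_mem_intertwiners hT (Pi.single i' 1) (Pi.single i 1)) fun h0 => hxy ?_⟩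
  · rw [← conjTranspose_tmulRight_mul_tmulRight_apply T, h0, Matrix.zero_apply]
  · rw [← conjTranspose_tmulLeft_mul_tmulLeft_apply T, h0, Matrix.zero_apply]

lemma mem_intertwiners_extTensor_inl {A : Matrix (Fin n) (Fin (p * q)) ℂ}
    (hA : ∀ j : Fin q, A * tmulRight p (Pi.single j (1 : ℂ)) ∈ intertwiners ρ (τ.comp (.inl G H))) :
    A ∈ intertwiners ((extTensor ρ σ).comp (.inl G H)) (τ.comp (.inl G H)) := fun g =>
  ext_mul_tmulRight_single fun j => by
    rw [Matrix.mul_assoc, ← tmulRight_mem_intertwiners, ← Matrix.mul_assoc, hA, Matrix.mul_assoc]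

/-- A `G`-intertwiner out of `ρ` is determined by its value at a single nonzero vector, so
`H`-equivariance needs to be tested on `v ⊗ ·` only. -/
lemma RepIrreducible.mem_intertwiners_extTensor_inr (hρ : RepIrreducible ρ)
    {A : Matrix (Fin n) (Fin (p * q)) ℂ}
    (hG : A ∈ intertwiners ((extTensor ρ σ).comp (.inl G H)) (τ.comp (.inl G H)))
    {v : Fin p → ℂ} (hv : v ≠ 0) (hH : A * tmulLeft q v ∈ intertwiners σ (τ.comp (.inr G H))) :
    A ∈ intertwiners ((extTensor ρ σ).comp (.inr G H)) (τ.comp (.inr G H)) := fun k => by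
  suffices hcomm : A * (extTensor ρ σ (1, k)).val - (τ (1, k)).val * A = 0 from
    sub_eq_zero.1 hcomm
  have hmem : A * (extTensor ρ σ (1, k)).val - (τ (1, k)).val * A ∈
      intertwiners ((extTensor ρ σ).comp (.inl G H)) (τ.comp (.inl G H)) :=
    sub_mem (mul_mem_intertwiners hG (apply_inr_mem_intertwiners k))
      (mul_mem_intertwiners (apply_inr_mem_intertwiners k) hG)
  have hzero : (A * (extTensor ρ σ (1, k)).val - (τ (1, k)).val * A) * tmulLeft q v = 0 := by
    have hv_mem : tmulLeft q v * (σ k).val = (extTensor ρ σ (1, k)).val * tmulLeft q v :=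
      tmulLeft_mem_intertwiners v k
    have hAv : A * tmulLeft q v * (σ k).val = (τ (1, k)).val * (A * tmulLeft q v) := hH k
    rw [Matrix.sub_mul, Matrix.mul_assoc, ← hv_mem, ← Matrix.mul_assoc, hAv, Matrix.mul_assoc,
      sub_self]
  refine ext_mul_tmulRight_single fun j => ?_
  rw [Matrix.zero_mul]
  refine hρ.eq_zero_of_mulVec_eq_zero
    (mul_mem_intertwiners hmem (tmulRight_mem_intertwiners (Pi.single j 1))) hv ?_
  rw [← Matrix.mulVec_mulVec, tmulRight_mulVec, Matrix.mulVec_mulVec, hzero, Matrix.zero_mulVec]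

/-- The subspace `{D v | D ∈ Hom_G(ρ, τ)}` of the space of `τ`. For irreducible `ρ` and `v ≠ 0` it
is a copy of the multiplicity space of `ρ` in `τ|_G`. -/
def multiplicitySpace (ρ : G →* Matrix.unitaryGroup (Fin p) ℂ)
    (τ : G × H →* Matrix.unitaryGroup (Fin n) ℂ) (v : Fin p → ℂ) : Submodule ℂ (Fin n → ℂ) :=
  (intertwiners ρ (τ.comp (.inl G H))).map ((Matrix.mulVecBilin ℂ ℂ).flip v)

lemma repInvariant_multiplicitySpace (v : Fin p → ℂ) :
    RepInvariant (τ.comp (.inr G H)) (multiplicitySpace ρ τ v) := by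
  rintro k _ ⟨D, hD, rfl⟩
  exact ⟨_, mul_mem_intertwiners (apply_inr_mem_intertwiners k) hD,
    (Matrix.mulVec_mulVec v (τ (1, k)).val D).symm⟩

lemma RepIrreducible.exists_extTensor_intertwiner (hρ : RepIrreducible ρ) {v : Fin p → ℂ}
    (hv : v ≠ 0) {S : Matrix (Fin n) (Fin q) ℂ} (hS : S ∈ intertwiners σ (τ.comp (.inr G H)))
    (hSv : S.mulVecLin.range ≤ multiplicitySpace ρ τ v) :
    ∃ A ∈ intertwiners (extTensor ρ σ) τ, A * tmulLeft q v = S := by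
  choose D hD hDv using fun j => hSv ⟨Pi.single j 1, rfl⟩
  let A : Matrix (Fin n) (Fin (p * q)) ℂ :=
    Matrix.of fun k x => D (finProdFinEquiv.symm x).2 k (finProdFinEquiv.symm x).1
  have hAD (j : Fin q) : A * tmulRight p (Pi.single j (1 : ℂ)) = D j := by
    ext k i
    simp [mul_tmulRight_single, A, -finProdFinEquiv_symm_apply]
  have hAS : A * tmulLeft q v = S := Matrix.ext_of_mulVec_single fun j => by
    rw [← Matrix.mulVec_mulVec, ← tmulRight_mulVec, Matrix.mulVec_mulVec, hAD]
    exact hDv j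
  have hG := mem_intertwiners_extTensor_inl (σ := σ) fun j => (hAD j).symm ▸ hD j
  exact ⟨A, mem_intertwiners_prod hG (hρ.mem_intertwiners_extTensor_inr hG hv (hAS.symm ▸ hS)), hAS⟩

theorem RepIrreducible.exists_extTensor_unitarilyEquivalent (hτ : RepIrreducible τ) :
    ∃ (p q : ℕ) (h : p * q = n) (ρ : G →* Matrix.unitaryGroup (Fin p) ℂ)
      (σ : H →* Matrix.unitaryGroup (Fin q) ℂ), RepIrreducible ρ ∧ RepIrreducible σ ∧
      UnitarilyEquivalent (transportRep h (extTensor ρ σ)) τ := by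
  have := hτ.neZero
  have htop : RepInvariant (τ.comp (.inl G H)) ⊤ := fun _ _ _ => trivial
  obtain ⟨p, ρ, T, hT, hρ, hT0, -⟩ := htop.exists_irreducible_intertwiner top_ne_bot
  have := hρ.neZero
  obtain ⟨v, hv⟩ := exists_ne (0 : Fin p → ℂ)
  have hM : multiplicitySpace ρ τ v ≠ ⊥ := (Submodule.ne_bot_iff _).2
    ⟨T *ᵥ v, ⟨T, hT, rfl⟩, fun h => hT0 (hρ.eq_zero_of_mulVec_eq_zero hT hv h)⟩
  obtain ⟨q, σ, S, hS, hσ, hS0, hSM⟩ :=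
    (repInvariant_multiplicitySpace v).exists_irreducible_intertwiner hM
  obtain ⟨A, hA, rfl⟩ := hρ.exists_extTensor_intertwiner hv hS hSM
  have hA0 : A ≠ 0 := by
    rintro rfl
    exact hS0 (Matrix.zero_mul _)
  obtain ⟨h, he⟩ := (hρ.extTensor hσ).unitarilyEquivalent_of_mem_intertwiners hτ hA hA0
  exact ⟨p, q, h, ρ, σ, hρ, hσ, he⟩

end ExternalTensor

/-! ### The map on equivalence classes -/

section Classes

variable (G H : Type*) [Group G] [Group H] (n : ℕ)

/-- Pairs of classes of irreducible representations of `G` and `H` whose dimensions are positive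
and have product `n`: the domain of the external tensor product into dimension `n`. -/
abbrev IrrClassPair : Type _ :=
  Σ pq : {x : ℕ × ℕ // 0 < x.1 ∧ 0 < x.2 ∧ x.1 * x.2 = n}, IrrClass G pq.1.1 × IrrClass H pq.1.2

variable {G H n}

/-- The external tensor product of equivalence classes of irreducible representations. Its values
lie in all equivalence classes, so that irreducibility is a statement about its range. -/
def extTensorClass (z : IrrClassPair G H n) : RepClass (G × H) n :=
  Quot.map₂ (fun (ρ : IrrRep G z.1.1.1) (σ : IrrRep H z.1.1.2) =>
      transportRep z.1.2.2.2 (extTensor ρ.1 σ.1))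
    (fun ρ _ _ hσ => (((unitarilyEquivalent_equivalence _).refl ρ.1).extTensor hσ).transportRep _)
    (fun _ _ σ hρ => (hρ.extTensor ((unitarilyEquivalent_equivalence _).refl σ.1)).transportRep _)
    z.2.1 z.2.2

lemma repClass_mk_eq_iff {ρ σ : G →* Matrix.unitaryGroup (Fin n) ℂ} :
    (Quot.mk _ ρ : RepClass G n) = Quot.mk _ σ ↔ UnitarilyEquivalent ρ σ :=
  Quotient.eq (r := ⟨_, unitarilyEquivalent_equivalence n⟩)

lemma extTensorClass_injective :
    Function.Injective (extTensorClass : IrrClassPair G H n → RepClass (G × H) n) := by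
  rintro ⟨⟨⟨p, q⟩, hp, hq, h⟩, ⟨ρ⟩, ⟨σ⟩⟩ ⟨⟨⟨p', q'⟩, hp', hq', h'⟩, ⟨ρ'⟩, ⟨σ'⟩⟩ heq
  obtain ⟨⟨(rfl : p = p'), hρ⟩, ⟨(rfl : q = q'), hσ⟩⟩ :=
    unitarilyEquivalent_factors_of_extTensor ρ.2 σ.2 ρ'.2 σ'.2 (repClass_mk_eq_iff.1 heq)
  exact congrArg (Sigma.mk _) (Prod.ext (Quot.sound hρ) (Quot.sound hσ))

lemma range_extTensorClass :
    Set.range (extTensorClass : IrrClassPair G H n → RepClass (G × H) n) =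
      {c : RepClass (G × H) n | ∃ τ, RepIrreducible τ ∧ c = Quot.mk _ τ} := by
  ext c
  constructor
  · rintro ⟨⟨pq, ⟨ρ⟩, ⟨σ⟩⟩, rfl⟩
    exact ⟨_, (ρ.2.extTensor σ.2).transportRep pq.2.2.2, rfl⟩
  · rintro ⟨τ, hτ, rfl⟩
    obtain ⟨p, q, h, ρ, σ, hρ, hσ, he⟩ := hτ.exists_extTensor_unitarilyEquivalent
    exact ⟨⟨⟨(p, q), hρ.1, hσ.1, h⟩, Quot.mk _ ⟨ρ, hρ⟩, Quot.mk _ ⟨σ, hσ⟩⟩, Quot.sound he⟩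

end Classes

/-- The external tensor product induces a bijection from the disjoint
union, over pairs `(p, q)` of positive integers with `p * q = n`, of products of
unitary-equivalence classes of irreducible representations of `G` and of `H`, onto the
set of unitary-equivalence classes of irreducible `n`-dimensional unitary
representations of `G × H`. -/
theorem extTensor_bijection_on_classes (G H : Type*) [Group G] [Group H] (n : ℕ)
    (hn : 1 ≤ n) :
    ∃ f : (Σ pq : {x : ℕ × ℕ // 0 < x.1 ∧ 0 < x.2 ∧ x.1 * x.2 = n},
            IrrClass G pq.1.1 × IrrClass H pq.1.2) → RepClass (G × H) n,
      (∀ (pq : {x : ℕ × ℕ // 0 < x.1 ∧ 0 < x.2 ∧ x.1 * x.2 = n})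
         (ρ : IrrRep G pq.1.1) (σ : IrrRep H pq.1.2),
          f ⟨pq, (Quot.mk _ ρ, Quot.mk _ σ)⟩ =
            Quot.mk _ (transportRep pq.2.2.2 (extTensor ρ.1 σ.1))) ∧
      Function.Injective f ∧
      Set.range f = {c : RepClass (G × H) n |
        ∃ τ : (G × H) →* Matrix.unitaryGroup (Fin n) ℂ,
          RepIrreducible τ ∧ c = Quot.mk _ τ} := by
  exact ⟨extTensorClass, fun _ _ _ => rfl, extTensorClass_injective, range_extTensorClass⟩
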